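/- arXiv:2401.06208 — 3 statements merged into one kernel-verified Lean document; each statement's English description precedes it below -/
import Mathlib

section
/- Let F be a field, let c ∈ F, let d ≥ 1 be an integer, and set g = 2^(d−1). Suppose u, v ∈ F satisfy u^g = c and v² = c·u. If x, y ∈ F with x ≠ 0 satisfy y² = x^(2^d + 1) − c·x, then (v·y/x^(g+1))² = (−u/x)^(2^d + 1) − c·(−u/x). -/
/-!
Put `f(x) = x^(2g+1) - u^g·x`. The substitution `x ↦ -u/x` exchanges the two monomials of `f` up to
scaling, so that `f(-u/x) = (u/x²)^(g+1)·f(x)`. If `v² = u^g·u`, the factor `(u/x²)^(g+1)` is the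
square of `v/x^(g+1)`, which is therefore what multiplies `y`.
-/

theorem div_pow_succ_sq {M : Type*} [DivisionCommMonoid M] {g : ℕ} {u v : M}
    (hv : v ^ 2 = u ^ g * u) (x : M) :
    (v / x ^ (g + 1)) ^ 2 = (u / x ^ 2) ^ (g + 1) := by
  rw [div_pow, div_pow, hv, ← pow_succ, pow_right_comm]

section

variable {F : Type*} [Field F]

theorem neg_div_pow_sub_pow_mul_neg_div (g : ℕ) (u : F) {x : F} (hx : x ≠ 0) :
    (-u / x) ^ (2 * g + 1) - u ^ g * (-u / x) =
      (u / x ^ 2) ^ (g + 1) * (x ^ (2 * g + 1) - u ^ g * x) := by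
  have leading : (-u / x) ^ (2 * g + 1) = -((u / x ^ 2) ^ (g + 1) * (u ^ g * x)) := by
    rw [neg_div, Odd.neg_pow (odd_two_mul_add_one g), div_pow, div_pow, ← pow_mul]
    field_simp
    ring
  have linear : u ^ g * (-u / x) = -((u / x ^ 2) ^ (g + 1) * x ^ (2 * g + 1)) := by
    rw [div_pow, ← pow_mul]
    field_simp
    ring
  rw [leading, linear]
  ring

theorem beta_d_automorphism_general (g : ℕ) {c u v : F} (hu : u ^ g = c) (hv : v ^ 2 = c * u)
    {x y : F} (hx : x ≠ 0) (h : y ^ 2 = x ^ (2 * g + 1) - c * x) :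
    (v * y / x ^ (g + 1)) ^ 2 = (-u / x) ^ (2 * g + 1) - c * (-u / x) := by
  subst hu
  calc (v * y / x ^ (g + 1)) ^ 2
      = (v / x ^ (g + 1)) ^ 2 * y ^ 2 := by rw [mul_div_right_comm, mul_pow]
    _ = (u / x ^ 2) ^ (g + 1) * (x ^ (2 * g + 1) - u ^ g * x) := by rw [div_pow_succ_sq hv, h]
    _ = (-u / x) ^ (2 * g + 1) - u ^ g * (-u / x) :=
      (neg_div_pow_sub_pow_mul_neg_div g u hx).symm

end

/-- With `g = 2^(d-1)`, `u^g = c`, `v² = c·u`, `x ≠ 0`, and `y² = x^(2^d+1) - c·x`,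
one has `(v·y/x^(g+1))² = (-u/x)^(2^d+1) - c·(-u/x)`, i.e.
`β_d(x,y) = (-c^(1/g)/x, c^b·y/x^(g+1))` is an automorphism of `C'_{2^d+1}`. -/
theorem beta_d_automorphism {F : Type*} [Field F] (c : F) (d : ℕ) (hd : 1 ≤ d)
    (g : ℕ) (hg : g = 2 ^ (d - 1))
    (u v : F) (hu : u ^ g = c) (hv : v ^ 2 = c * u)
    (x y : F) (hx : x ≠ 0) (h : y ^ 2 = x ^ (2 ^ d + 1) - c * x) :
    (v * y / x ^ (g + 1)) ^ 2 = (-u / x) ^ (2 ^ d + 1) - c * (-u / x) := by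
  rw [← mul_pow_sub_one (Nat.one_le_iff_ne_zero.mp hd) 2, ← hg] at h ⊢
  exact beta_d_automorphism_general g hu hv hx h
end

section
/- Let d ≥ 1 be an integer, let g = 2^(d−1), and let c be a nonzero rational number. Let ζ ∈ ℂ be a primitive 2^(d+1)-th root of unity, let r ∈ ℂ satisfy r^(2g) = c, and let K = ℚ(ζ, r) ⊆ ℂ. Assume K/ℚ is Galois of degree 2^(2d). If σ₋₁, σ₅, τ ∈ Gal(K/ℚ) satisfy σ₋₁(ζ) = ζ^(−1), σ₋₁(r) = r, σ₅(ζ) = ζ^5, σ₅(r) = r, τ(ζ) = ζ, and τ(r) = ζ²·r, then the subgroup of Gal(K/ℚ) generated by {σ₋₁, σ₅, τ} equals Gal(K/ℚ). -/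
/-!
The action on `ζ` is a homomorphism from `Gal(K/ℚ)` to `(ℤ/2^(d+1))ˣ`. An automorphism in its
kernel multiplies `r` by a `2^d`-th root of unity, that is, by a power of `ζ²`, so the kernel is
generated by `τ`. Since `(ℤ/2^(d+1))ˣ` is generated by `-1` and `5`, which are the images of `σ₋₁`
and `σ₅`, the three automorphisms generate the whole group.
-/

open IntermediateField Polynomial

section Group

variable {G : Type*} [Group G]

theorem isCoatom_of_prime_index {H : Subgroup G} (hH : H.index.Prime) : IsCoatom H := by
  refine ⟨fun H_eq_top ↦ hH.ne_one (Subgroup.index_eq_one.2 H_eq_top), fun K H_lt_K ↦ ?_⟩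
  have relIndex_ne_one : H.relIndex K ≠ 1 := fun h ↦ H_lt_K.not_ge (Subgroup.relIndex_eq_one.1 h)
  rw [← Subgroup.relIndex_mul_index H_lt_K.le, Nat.prime_mul_iff] at hH
  exact Subgroup.index_eq_one.1 (by tauto)

theorem eq_top_of_ker_le_of_map_eq_top {G' : Type*} [Group G'] {f : G →* G'} {H : Subgroup G}
    (ker_le : f.ker ≤ H) (map_eq_top : H.map f = ⊤) : H = ⊤ := by
  rw [← Subgroup.comap_map_eq_self ker_le, map_eq_top, Subgroup.comap_top]

end Group

section ZModTwoPow

variable {a : ℤ} {n : ℕ}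

theorem neg_one_notMem_zpowers_one_add_four_mul {u : (ZMod (2 ^ (n + 2)))ˣ}
    (hu : (u : ZMod (2 ^ (n + 2))) = 1 + 4 * a) : -1 ∉ Subgroup.zpowers u := by
  have four_dvd : 4 ∣ 2 ^ (n + 2) := pow_dvd_pow 2 (Nat.le_add_left 2 n)
  let π : (ZMod (2 ^ (n + 2)))ˣ →* (ZMod 4)ˣ := ZMod.unitsMap four_dvd
  have π_u : π u = 1 := by
    ext
    have four_eq_zero : (4 : ZMod 4) = 0 := rfl
    change ZMod.castHom four_dvd (ZMod 4) u = 1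
    rw [hu, map_add, map_one, map_mul, map_ofNat, four_eq_zero, zero_mul, add_zero]
  have π_neg_one : π (-1) ≠ 1 := by
    have map_neg_one : π (-1) = -1 := by ext; simp [π, ZMod.unitsMap_def]
    rw [map_neg_one]
    decide
  exact fun neg_one_mem ↦ π_neg_one ((Subgroup.zpowers_le (H := π.ker)).2 π_u neg_one_mem)

theorem index_zpowers_one_add_four_mul (ha : Odd a) {u : (ZMod (2 ^ (n + 2)))ˣ}
    (hu : (u : ZMod (2 ^ (n + 2))) = 1 + 4 * a) : (Subgroup.zpowers u).index = 2 := by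
  have card_zpowers : Nat.card (Subgroup.zpowers u) = 2 ^ n := by
    rw [Nat.card_zpowers, ← orderOf_units, hu, ZMod.orderOf_one_add_four_mul a ha]
  have card_units : Nat.card (ZMod (2 ^ (n + 2)))ˣ = 2 ^ n * 2 := by
    rw [Nat.card_eq_fintype_card, ZMod.card_units_eq_totient,
      Nat.totient_prime_pow_succ Nat.prime_two, pow_succ, Nat.add_one_sub_one, mul_one]
  have card_mul_index := (Subgroup.zpowers u).card_mul_index
  rw [card_zpowers, card_units] at card_mul_index
  exact Nat.eq_of_mul_eq_mul_left (by positivity) card_mul_index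

theorem closure_neg_one_one_add_four_mul_eq_top (ha : Odd a) :
    ∀ {n : ℕ} {u : (ZMod (2 ^ n))ˣ}, (u : ZMod (2 ^ n)) = 1 + 4 * a →
      Subgroup.closure {-1, u} = ⊤
  | 0, _, _ => Subsingleton.elim (α := Subgroup (ZMod 1)ˣ) _ _
  | 1, _, _ => Subsingleton.elim (α := Subgroup (ZMod 2)ˣ) _ _
  | n + 2, u, hu => by
    have isCoatom_zpowers : IsCoatom (Subgroup.zpowers u) :=
      isCoatom_of_prime_index ((index_zpowers_one_add_four_mul ha hu).symm ▸ Nat.prime_two)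
    refine isCoatom_zpowers.2 _ (SetLike.lt_iff_le_and_exists.2 ⟨?_, -1, ?_, ?_⟩)
    · exact Subgroup.zpowers_le.2 (Subgroup.subset_closure (by simp))
    · exact Subgroup.subset_closure (by simp)
    · exact neg_one_notMem_zpowers_one_add_four_mul hu

end ZModTwoPow

theorem exists_eq_pow_mul_of_pow_eq_pow {R : Type*} [CommRing R] [IsDomain R] {n : ℕ} (hn : 0 < n)
    {ω x y : R} (hω : IsPrimitiveRoot ω n) (hxy : y ^ n = x ^ n) : ∃ i : ℕ, y = ω ^ i * x := by
  have y_mem : y ∈ nthRoots n (x ^ n) := (mem_nthRoots hn).2 hxy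
  rw [hω.nthRoots_eq rfl] at y_mem
  obtain ⟨i, -, hi⟩ := Multiset.mem_map.1 y_mem
  exact ⟨i, hi.symm⟩

theorem coe_autToPow_eq_intCast {R S : Type*} [CommRing R] [Field S] [Algebra R S] {n : ℕ}
    [NeZero n] {ζ : S} (hζ : IsPrimitiveRoot ζ n) {σ : S ≃ₐ[R] S} {k : ℤ} (hσ : σ ζ = ζ ^ k) :
    (hζ.autToPow R σ : ZMod n) = k := by
  set m : (ZMod n)ˣ := hζ.autToPow R σ
  have hζ0 : ζ ≠ 0 := hζ.ne_zero (NeZero.ne n)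
  have zpow_sub_eq_one : ζ ^ (((m : ZMod n).val : ℤ) - k) = 1 := by
    rw [zpow_sub₀ hζ0, zpow_natCast, hζ.autToPow_spec R, hσ, div_self (zpow_ne_zero k hζ0)]
  have intCast_sub_eq_zero : ((((m : ZMod n).val : ℤ) - k : ℤ) : ZMod n) = 0 :=
    (ZMod.intCast_zmod_eq_zero_iff_dvd _ n).2 ((hζ.zpow_eq_one_iff_dvd _).1 zpow_sub_eq_one)
  rwa [Int.cast_sub, Int.cast_natCast, ZMod.natCast_zmod_val, sub_eq_zero] at intCast_sub_eq_zero

theorem apply_eq_self_of_mem_ker_autToPow {R S : Type*} [CommRing R] [CommRing S] [IsDomain S]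
    [Algebra R S] {n : ℕ} [NeZero n] {ζ : S} (hζ : IsPrimitiveRoot ζ n) {σ : S ≃ₐ[R] S}
    (hσ : σ ∈ (hζ.autToPow R).ker) : σ ζ = ζ := by
  rw [← hζ.autToPow_spec R σ, MonoidHom.mem_ker.1 hσ, Units.val_one, ZMod.val_one_eq_one_mod,
    hζ.eq_orderOf, pow_mod_orderOf, pow_one]

theorem pow_apply_eq_pow_mul {R A : Type*} [CommSemiring R] [Semiring A] [Algebra R A]
    {τ : A ≃ₐ[R] A} {ω x : A} (hω : τ ω = ω) (hx : τ x = ω * x) (j : ℕ) :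
    (τ ^ j) x = ω ^ j * x := by
  induction j with
  | zero => simp
  | succ j ih =>
    rw [pow_succ', AlgEquiv.mul_apply, ih, map_mul, map_pow, hω, hx, ← mul_assoc, ← pow_succ]

section IntermediateField

variable {F L : Type*} [Field F] [Field L] [Algebra F L]

theorem algHom_ext_of_adjoin_eq_top {A : Type*} [Semiring A] [Algebra F A] {S : Set L}
    (hS : adjoin F S = ⊤) {φ ψ : L →ₐ[F] A} (h : S.EqOn φ ψ) : φ = ψ := by
  let ι : (⊤ : IntermediateField F L) →ₐ[F] L := val ⊤
  have comp_ι_eq : φ.comp ι = ψ.comp ι :=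
    algHom_ext_of_eq_adjoin F hS.symm fun _ hx ↦ h hx
  exact AlgHom.ext fun y ↦ DFunLike.congr_fun comp_ι_eq ⟨y, mem_top⟩

theorem adjoin_eq_top_of_adjoin_image_val_eq {K : IntermediateField F L} {S : Set K}
    (hS : adjoin F ((↑) '' S : Set L) = K) : adjoin F S = ⊤ :=
  lift_injective K (by rw [lift_adjoin, lift_top, hS])

theorem mem_zpowers_of_apply_eq_self {n : ℕ} (hn : 0 < n) {ζ ω x : L} {c : F}
    (hL : adjoin F {ζ, x} = ⊤) (hω : IsPrimitiveRoot ω n) (hx : x ^ n = algebraMap F L c)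
    {τ : L ≃ₐ[F] L} (hτζ : τ ζ = ζ) (hτω : τ ω = ω) (hτx : τ x = ω * x)
    {s : L ≃ₐ[F] L} (hsζ : s ζ = ζ) : s ∈ Subgroup.zpowers τ := by
  have pow_eq_pow : s x ^ n = x ^ n := by rw [← map_pow, hx, AlgEquiv.commutes]
  obtain ⟨j, hj⟩ := exists_eq_pow_mul_of_pow_eq_pow hn hω pow_eq_pow
  have s_eq_pow : (s : L →ₐ[F] L) = (τ ^ j : L ≃ₐ[F] L) := by
    refine algHom_ext_of_adjoin_eq_top hL ?_
    rintro y (rfl | rfl)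
    · have pow_fixes : (τ ^ j) y = 1 ^ j * y :=
        pow_apply_eq_pow_mul (map_one τ) (by rw [hτζ, one_mul]) j
      rw [one_pow, one_mul] at pow_fixes
      exact hsζ.trans pow_fixes.symm
    · exact hj.trans (pow_apply_eq_pow_mul hτω hτx j).symm
  rw [AlgEquiv.coe_toAlgHom_injective s_eq_pow]
  exact Subgroup.npow_mem_zpowers τ j

theorem galois_group_generated_by_three_general {d : ℕ} {ζ x : L} {c : F}
    (hζ : IsPrimitiveRoot ζ (2 ^ (d + 1))) (hx : x ^ 2 ^ d = algebraMap F L c)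
    (hL : adjoin F {ζ, x} = ⊤) {σ₁ σ₅ τ : L ≃ₐ[F] L} (hσ₁ : σ₁ ζ = ζ⁻¹) (hσ₅ : σ₅ ζ = ζ ^ 5)
    (hτζ : τ ζ = ζ) (hτx : τ x = ζ ^ 2 * x) :
    Subgroup.closure {σ₁, σ₅, τ} = ⊤ := by
  let χ : (L ≃ₐ[F] L) →* (ZMod (2 ^ (d + 1)))ˣ := hζ.autToPow F
  have χ_σ₁ : χ σ₁ = -1 := by
    ext
    simpa using coe_autToPow_eq_intCast hζ (k := -1) (by rw [hσ₁, zpow_neg_one])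
  have χ_σ₅ : (χ σ₅ : ZMod (2 ^ (d + 1))) = 1 + 4 * (1 : ℤ) := by
    rw [coe_autToPow_eq_intCast hζ (k := 5) (by exact_mod_cast hσ₅)]
    norm_num
  have hζ_sq : IsPrimitiveRoot (ζ ^ 2) (2 ^ d) := hζ.pow (by positivity) (pow_succ' 2 d)
  refine eq_top_of_ker_le_of_map_eq_top (f := χ) (fun s hs ↦ ?_) (top_unique ?_)
  · have τ_mem : τ ∈ Subgroup.closure {σ₁, σ₅, τ} := Subgroup.subset_closure (by simp)
    exact Subgroup.zpowers_le.2 τ_mem <|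
      mem_zpowers_of_apply_eq_self (by positivity) hL hζ_sq hx hτζ (by rw [map_pow, hτζ]) hτx
        (apply_eq_self_of_mem_ker_autToPow hζ hs)
  · rw [← closure_neg_one_one_add_four_mul_eq_top odd_one χ_σ₅, ← χ_σ₁, MonoidHom.map_closure,
      ← Set.image_pair]
    exact Subgroup.closure_mono (Set.image_mono (Set.insert_subset_insert (by simp)))

end IntermediateField

/-- For `d ≥ 1`, `g = 2^(d-1)`, `c ∈ ℚˣ`, `ζ` a primitive `2^(d+1)`-th root of unity,
`r` with `r^(2g) = c`, and `K = ℚ(ζ, r)` Galois of degree `2^(2d)` over `ℚ`, the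
automorphisms `σ₋₁, σ₅, τ` acting as stated generate `Gal(K/ℚ)`. -/
theorem galois_group_generated_by_three (d : ℕ) (hd : 1 ≤ d)
    (g : ℕ) (hg : g = 2 ^ (d - 1)) (c : ℚ) (hc : c ≠ 0)
    (ζ r : ℂ) (hζ : IsPrimitiveRoot ζ (2 ^ (d + 1))) (hr : r ^ (2 * g) = (c : ℂ))
    (K : IntermediateField ℚ ℂ) (hK : K = IntermediateField.adjoin ℚ {ζ, r})
    [IsGalois ℚ K] (hdeg : Module.finrank ℚ K = 2 ^ (2 * d))
    (hζK : ζ ∈ K) (hrK : r ∈ K)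
    (σ₁ σ₅ τ : K ≃ₐ[ℚ] K)
    (hσ₁ζ : σ₁ ⟨ζ, hζK⟩ = (⟨ζ, hζK⟩ : K)⁻¹) (hσ₁r : σ₁ ⟨r, hrK⟩ = ⟨r, hrK⟩)
    (hσ₅ζ : σ₅ ⟨ζ, hζK⟩ = ⟨ζ, hζK⟩ ^ 5) (hσ₅r : σ₅ ⟨r, hrK⟩ = ⟨r, hrK⟩)
    (hτζ : τ ⟨ζ, hζK⟩ = ⟨ζ, hζK⟩) (hτr : τ ⟨r, hrK⟩ = ⟨ζ, hζK⟩ ^ 2 * ⟨r, hrK⟩) :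
    Subgroup.closure {σ₁, σ₅, τ} = (⊤ : Subgroup (K ≃ₐ[ℚ] K)) := by
  have two_mul_g : 2 * g = 2 ^ d := by rw [hg, ← pow_succ', Nat.sub_add_cancel hd]
  exact galois_group_generated_by_three_general (IsPrimitiveRoot.coe_submonoidClass_iff.1 hζ)
    (Subtype.ext (two_mul_g ▸ hr))
    (adjoin_eq_top_of_adjoin_image_val_eq ((Set.image_pair _ _ _).symm ▸ hK.symm))
    hσ₁ζ hσ₅ζ hτζ hτr
end

section
/- For integers 1 ≤ d₁ < d₂, define F₁ = ℚ(i) and, for d ≥ 2, F_d = ℚ(ζ_{2^(d+1)} − ζ_{2^(d+1)}^(−1)) ⊆ ℂ, where ζ_{2^(d+1)} = exp(2πi/2^(d+1)). Then there is no field embedding (ring homomorphism) from F_{d₁} into F_{d₂}. -/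
/-- The CM field `F_d` of the simple factor `X_d`: `F₁ = ℚ(i)` and, for `d ≥ 2`,
`F_d = ℚ(ζ_{2^(d+1)} - ζ_{2^(d+1)}⁻¹)` where `ζ_{2^(d+1)} = exp(2πi/2^(d+1))`. -/
noncomputable def cmField (d : ℕ) : IntermediateField ℚ ℂ :=
  if d = 1 then IntermediateField.adjoin ℚ ({Complex.I} : Set ℂ)
  else IntermediateField.adjoin ℚ
    ({Complex.exp (2 * Real.pi * Complex.I / 2 ^ (d + 1)) -
        (Complex.exp (2 * Real.pi * Complex.I / 2 ^ (d + 1)))⁻¹} : Set ℂ)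

/-!
Put `θ ξ = ξ - ξ⁻¹`. For a root of unity `η`, the field `ℚ(θ η)` lies in the abelian extension
`ℚ(η)`, so it is normal over `ℚ` and embeds into `ℚ(θ ζ)` only if `ℚ(θ η) ⊆ ℚ(θ ζ)`. When `4`
divides the order of `ζ`, the element `-ζ⁻¹` is conjugate to `ζ`, and the automorphism
`ζ ↦ -ζ⁻¹` of `ℚ(ζ)` fixes `θ ζ`. But it inverts even powers of `ζ`, so if `η` is one of them
it sends `θ η` to `-θ η`. Hence `θ η = 0`, that is `η = ±1`.
-/

open IntermediateField Polynomial

section Embeddings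

variable {k L : Type*} [Field k] [Field L] [Algebra k L]

theorem le_of_algHom_of_normal {E F : IntermediateField k L} [Normal k E] (f : E →ₐ[k] F) :
    E ≤ F := by
  rw [← (F.val.comp f).fieldRange_of_normal]
  rintro _ ⟨x, rfl⟩
  exact (f x).2

theorem adjoin_simple_sub_inv_le (x : L) : k⟮x - x⁻¹⟯ ≤ k⟮x⟯ :=
  adjoin_simple_le_iff.mpr <|
    sub_mem (mem_adjoin_simple_self k x) (inv_mem (mem_adjoin_simple_self k x))

theorem exists_algHom_adjoin_simple_of_isConjRoot {x y : L} (hx : IsIntegral k x)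
    (hxy : IsConjRoot k x y) : ∃ φ : k⟮x⟯ →ₐ[k] L, φ (AdjoinSimple.gen k x) = y :=
  ⟨(algHomAdjoinIntegralEquiv k hx).symm
      ⟨y, mem_aroots.mpr ⟨minpoly.ne_zero hx, hxy.aeval_eq_zero⟩⟩,
    algHomAdjoinIntegralEquiv_symm_apply_gen k hx _⟩

theorem pow_sub_inv_pow_eq_zero_of_mem_adjoin [NeZero (2 : L)] {x : L} (hx : IsIntegral k x)
    (hconj : IsConjRoot k x (-x⁻¹)) {j : ℕ} (hj : Even j)
    (hmem : x ^ j - (x ^ j)⁻¹ ∈ k⟮x - x⁻¹⟯) : x ^ j - (x ^ j)⁻¹ = 0 := by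
  obtain ⟨σ, hσ⟩ := exists_algHom_adjoin_simple_of_isConjRoot hx hconj
  have σ_fixes : σ.comp (inclusion (adjoin_simple_sub_inv_le x)) = k⟮x - x⁻¹⟯.val := by
    refine adjoin_algHom_ext k fun y hy ↦ ?_
    obtain rfl : y = x - x⁻¹ := hy
    change σ (AdjoinSimple.gen k x - (AdjoinSimple.gen k x)⁻¹) = x - x⁻¹
    rw [map_sub, map_inv₀, hσ, inv_neg, inv_inv]
    ring
  have σ_negates : σ (AdjoinSimple.gen k x ^ j - (AdjoinSimple.gen k x ^ j)⁻¹) =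
      -(x ^ j - (x ^ j)⁻¹) := by
    rw [map_sub, map_inv₀, map_pow, hσ, hj.neg_pow, inv_pow, inv_inv, neg_sub]
  have h_eq_neg : x ^ j - (x ^ j)⁻¹ = -(x ^ j - (x ^ j)⁻¹) :=
    (DFunLike.congr_fun σ_fixes ⟨_, hmem⟩).symm.trans σ_negates
  exact (mul_eq_zero_iff_left two_ne_zero).mp (by linear_combination h_eq_neg)

end Embeddings

section RootsOfUnity

theorem isPrimitiveRoot_neg_of_four_dvd {M : Type*} [CommMonoid M] [HasDistribNeg M] {ζ : M} {n : ℕ}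
    (hζ : IsPrimitiveRoot ζ n) (hn : 4 ∣ n) : IsPrimitiveRoot (-ζ) n where
  pow_eq_one := by
    rw [(even_iff_two_dvd.mpr (dvd_trans (by decide) hn)).neg_pow, hζ.pow_eq_one]
  dvd_of_pow_eq_one l hl := by
    have h_dvd : n ∣ 2 * l :=
      hζ.dvd_of_pow_eq_one _ <| by rw [← (even_two_mul l).neg_pow, mul_comm, pow_mul, hl, one_pow]
    have l_even : Even l := even_iff_two_dvd.mpr (by have := hn.trans h_dvd; omega)
    exact hζ.dvd_of_pow_eq_one l (by rwa [← l_even.neg_pow])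

variable {k L : Type*} [Field k] [Field L] [Algebra k L]

theorem isConjRoot_of_isPrimitiveRoot {n : ℕ} [NeZero n] (hirr : Irreducible (cyclotomic n k))
    {ζ ξ : L} (hζ : IsPrimitiveRoot ζ n) (hξ : IsPrimitiveRoot ξ n) : IsConjRoot k ζ ξ := by
  have : NeZero (n : L) := hζ.neZero'
  have : NeZero (n : k) := NeZero.nat_of_neZero (algebraMap k L)
  rw [isConjRoot_def, ← hζ.minpoly_eq_cyclotomic_of_irreducible hirr,
    ← hξ.minpoly_eq_cyclotomic_of_irreducible hirr]

theorem isCyclotomicExtension_adjoin_simple {n : ℕ} [NeZero n] {ζ : L}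
    (hζ : IsPrimitiveRoot ζ n) : IsCyclotomicExtension {n} k k⟮ζ⟯ := by
  have hζ_int : IsIntegral k ζ := (hζ.isIntegral (NeZero.pos n)).tower_top
  change IsCyclotomicExtension {n} k k⟮ζ⟯.toSubalgebra
  rw [adjoin_simple_toSubalgebra_of_isAlgebraic hζ_int.isAlgebraic]
  exact hζ.adjoin_isCyclotomicExtension k

theorem normal_of_le_adjoin_isPrimitiveRoot {n : ℕ} [NeZero n] {ζ : L} (hζ : IsPrimitiveRoot ζ n)
    {E : IntermediateField k L} (hE : E ≤ k⟮ζ⟯) : Normal k E := by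
  have := isCyclotomicExtension_adjoin_simple (k := k) hζ
  have := IsCyclotomicExtension.isAbelianGalois {n} k k⟮ζ⟯
  have := IsAbelianGalois.of_algHom (inclusion hE)
  infer_instance

theorem exists_even_pow_eq_of_two_mul_dvd {R : Type*} [CommRing R] [IsDomain R] {m n : ℕ}
    [NeZero n] {η ζ : R} (hη : IsPrimitiveRoot η m) (hζ : IsPrimitiveRoot ζ n)
    (hmn : 2 * m ∣ n) : ∃ j, Even j ∧ ζ ^ j = η := by
  obtain ⟨c, rfl⟩ := hmn
  have : NeZero m := ⟨by rintro rfl; exact NeZero.ne (2 * 0 * c) (by simp)⟩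
  have hζ_pow : IsPrimitiveRoot (ζ ^ (2 * c)) m := hζ.pow (NeZero.pos _) (by ring)
  obtain ⟨i, -, hi⟩ := hζ_pow.eq_pow_of_pow_eq_one hη.pow_eq_one
  exact ⟨2 * c * i, (even_two_mul c).mul_right i, by rw [pow_mul, hi]⟩

theorem sub_inv_ne_zero_of_isPrimitiveRoot {m : ℕ} {η : L} (hη : IsPrimitiveRoot η m)
    (hm : 2 < m) : η - η⁻¹ ≠ 0 := by
  rw [sub_ne_zero, Ne, ← mul_eq_one_iff_eq_inv₀ (hη.ne_zero (by omega)), ← sq]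
  exact hη.pow_ne_one_of_pos_of_lt two_ne_zero hm

theorem no_embedding_between_cm_fields_general {m n : ℕ} {η ζ : L}
    (hirr : Irreducible (cyclotomic n k)) (hη : IsPrimitiveRoot η m) (hζ : IsPrimitiveRoot ζ n)
    (hm : 2 < m) (hn : 4 ∣ n) (hmn : 2 * m ∣ n) :
    IsEmpty (k⟮η - η⁻¹⟯ →ₐ[k] k⟮ζ - ζ⁻¹⟯) := by
  refine ⟨fun f ↦ sub_inv_ne_zero_of_isPrimitiveRoot hη hm ?_⟩
  have : NeZero m := ⟨by omega⟩
  have : NeZero n := ⟨by rintro rfl; simp at hirr⟩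
  have : NeZero (n : L) := hζ.neZero'
  have : NeZero (2 : L) := ⟨ne_zero_of_dvd_ne_zero (NeZero.ne (n : L)) <| by
    exact_mod_cast Nat.cast_dvd_cast (α := L) ((show 2 ∣ 4 by decide).trans hn)⟩
  have : Normal k k⟮η - η⁻¹⟯ := normal_of_le_adjoin_isPrimitiveRoot hη (adjoin_simple_sub_inv_le η)
  have η_mem : η - η⁻¹ ∈ k⟮ζ - ζ⁻¹⟯ := le_of_algHom_of_normal f (mem_adjoin_simple_self k _)
  have hconj : IsConjRoot k ζ (-ζ⁻¹) :=
    isConjRoot_of_isPrimitiveRoot hirr hζ (isPrimitiveRoot_neg_of_four_dvd hζ.inv hn)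
  obtain ⟨j, hj, rfl⟩ := exists_even_pow_eq_of_two_mul_dvd hη hζ hmn
  exact pow_sub_inv_pow_eq_zero_of_mem_adjoin (hζ.isIntegral (NeZero.pos n)).tower_top
    hconj hj η_mem

end RootsOfUnity

theorem isPrimitiveRoot_exp_two_pow (r : ℕ) :
    IsPrimitiveRoot (Complex.exp (2 * Real.pi * Complex.I / 2 ^ r)) (2 ^ r) := by
  exact_mod_cast Complex.isPrimitiveRoot_exp (2 ^ r) (by positivity)

theorem adjoin_I_sub_inv : ℚ⟮Complex.I - Complex.I⁻¹⟯ = ℚ⟮Complex.I⟯ := by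
  refine le_antisymm (adjoin_simple_sub_inv_le Complex.I) (adjoin_simple_le_iff.mpr ?_)
  have h_half : Complex.I = (Complex.I - Complex.I⁻¹) / 2 := by rw [Complex.inv_I]; ring
  have h_mem := div_mem (mem_adjoin_simple_self ℚ (Complex.I - Complex.I⁻¹)) (ofNat_mem _ 2)
  rwa [← h_half] at h_mem

theorem cmField_eq_adjoin_sub_inv (d : ℕ) :
    cmField d = ℚ⟮Complex.exp (2 * Real.pi * Complex.I / 2 ^ (d + 1)) -
      (Complex.exp (2 * Real.pi * Complex.I / 2 ^ (d + 1)))⁻¹⟯ := by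
  obtain rfl | hd := eq_or_ne d 1
  · have h_exp : Complex.exp (2 * Real.pi * Complex.I / 2 ^ (1 + 1)) = Complex.I := by
      convert Complex.exp_pi_div_two_mul_I using 2
      ring
    rw [cmField, if_pos rfl, h_exp, adjoin_I_sub_inv]
  · rw [cmField, if_neg hd]

/-- For `1 ≤ d₁ < d₂` there is no field embedding of `F_{d₁}` into `F_{d₂}`. -/
theorem no_embedding_between_cm_fields (d₁ d₂ : ℕ) (h1 : 1 ≤ d₁) (h2 : d₁ < d₂) :
    IsEmpty (cmField d₁ →+* cmField d₂) := by
  have h_lt : 2 < 2 ^ (d₁ + 1) := lt_self_pow₀ one_lt_two (by omega)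
  have h_four : 4 ∣ 2 ^ (d₂ + 1) := pow_dvd_pow 2 (show 2 ≤ d₂ + 1 by omega)
  have h_dvd : 2 * 2 ^ (d₁ + 1) ∣ 2 ^ (d₂ + 1) := by
    rw [← pow_succ']
    exact pow_dvd_pow 2 (by omega)
  rw [cmField_eq_adjoin_sub_inv, cmField_eq_adjoin_sub_inv]
  have h_empty := no_embedding_between_cm_fields_general
    (cyclotomic.irreducible_rat (by positivity)) (isPrimitiveRoot_exp_two_pow (d₁ + 1))
    (isPrimitiveRoot_exp_two_pow (d₂ + 1)) h_lt h_four h_dvd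
  exact ⟨fun f ↦ h_empty.false f.toRatAlgHom⟩
end
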